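/- arXiv:1706.08570 — 2 statements merged into one kernel-verified Lean document; each statement's English description precedes it below -/
import Mathlib

section
/- Let X be a metric space, Δ : X → ℝ a function, and z₀ ∈ ℝ, δ > 0, ε > 0 be such that for all x, y ∈ X with Δ(x) ≥ z₀ and dist(x, y) < ε one has |Δ(x) − Δ(y)| < δ. For z ∈ ℝ write A(z) = {x ∈ X : Δ(x) ≥ z}, A'(z, ε) = {x ∈ A(z) : dist(x, X ∖ A(z)) ≥ ε}, and A''(z, ε) = {x ∈ X : dist(x, A(z)) < ε}. Then for every z ≥ z₀ one has the chain of inclusions A(z + δ) ⊆ A'(z, ε) ⊆ A(z) ⊆ A''(z, ε) ⊆ A(z − δ). -/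
/-!
The first and the last inclusion are the same fact. Since `dist` is symmetric, erosion `A ↦ A'`
and dilation `A ↦ A''` are adjoint: `B ⊆ A'` if and only if the `ε`-neighborhood of `B` lies in
`A`. Hence `A(z + δ) ⊆ A'(z, ε)` says that `A''(w, ε) ⊆ A(w - δ)` at the level `w = z + δ`, and
this holds at every level `w ≥ z₀` because `Δ` drops by at most `δ` when one moves by less than
`ε` from a point of `A(w)`.
-/

open Metric EMetric Set

/-- `A(z) = {x : Δ(x) ≥ z}`, the superlevel set of `Δ`. -/
def superlevelSet {X : Type*} [MetricSpace X] (Δ : X → ℝ) (z : ℝ) : Set X :=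
  {x | z ≤ Δ x}

/-- `A'(z, ε) = {x ∈ A(z) : dist(x, X ∖ A(z)) ≥ ε}`, the set of points of `A(z)` at distance
at least `ε` from its complement (the distance to the empty set being `+∞`). -/
def innerApprox {X : Type*} [MetricSpace X] (Δ : X → ℝ) (z ε : ℝ) : Set X :=
  {x | x ∈ superlevelSet Δ z ∧ ENNReal.ofReal ε ≤ infEdist x (superlevelSet Δ z)ᶜ}

/-- `A''(z, ε) = {x : dist(x, A(z)) < ε}`, the open `ε`-neighborhood of `A(z)`. -/
def outerApprox {X : Type*} [MetricSpace X] (Δ : X → ℝ) (z ε : ℝ) : Set X :=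
  {x | infEdist x (superlevelSet Δ z) < ENNReal.ofReal ε}

theorem thickening_subset_iff_subset_compl_thickening_compl {X : Type*} [PseudoEMetricSpace X]
    {s t : Set X} {ε : ℝ} : thickening ε s ⊆ t ↔ s ⊆ (thickening ε tᶜ)ᶜ where
  mp h := (subset_compl_thickening_compl_thickening_self ε s).trans <|
    compl_subset_compl.mpr <| thickening_subset_of_subset ε <| compl_subset_compl.mpr h
  mpr h := (thickening_subset_of_subset ε h).trans <| by
    simpa only [compl_compl] using thickening_compl_thickening_self_subset_compl ε tᶜ

section Superlevel

variable {X : Type*} [MetricSpace X] {Δ : X → ℝ} {z δ ε : ℝ}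

theorem outerApprox_eq_thickening : outerApprox Δ z ε = thickening ε (superlevelSet Δ z) :=
  rfl

theorem innerApprox_eq_inter_compl_thickening :
    innerApprox Δ z ε = superlevelSet Δ z ∩ (thickening ε (superlevelSet Δ z)ᶜ)ᶜ :=
  Set.ext fun _ => and_congr_right fun _ => not_lt.symm

theorem innerApprox_subset_superlevelSet : innerApprox Δ z ε ⊆ superlevelSet Δ z :=
  fun _ hx => hx.1

theorem superlevelSet_subset_outerApprox (hε : 0 < ε) :
    superlevelSet Δ z ⊆ outerApprox Δ z ε :=
  self_subset_thickening hε _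

theorem subset_innerApprox_iff_thickening_subset (hε : 0 < ε) {s : Set X} :
    s ⊆ innerApprox Δ z ε ↔ thickening ε s ⊆ superlevelSet Δ z := by
  rw [innerApprox_eq_inter_compl_thickening, subset_inter_iff,
    ← thickening_subset_iff_subset_compl_thickening_compl]
  exact and_iff_right_of_imp (self_subset_thickening hε s).trans

theorem outerApprox_subset_superlevelSet_sub
    (hdrop : ∀ x y : X, z ≤ Δ x → dist x y < ε → Δ x - Δ y ≤ δ) :
    outerApprox Δ z ε ⊆ superlevelSet Δ (z - δ) := by
  intro y hy
  rw [outerApprox_eq_thickening, mem_thickening_iff] at hy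
  obtain ⟨x, hx : z ≤ Δ x, hyx⟩ := hy
  calc z - δ ≤ Δ x - δ := sub_le_sub_right hx δ
    _ ≤ Δ y := sub_le_comm.mp (hdrop x y hx (dist_comm y x ▸ hyx))

theorem superlevelSet_add_subset_innerApprox (hε : 0 < ε)
    (hdrop : ∀ x y : X, z + δ ≤ Δ x → dist x y < ε → Δ x - Δ y ≤ δ) :
    superlevelSet Δ (z + δ) ⊆ innerApprox Δ z ε := by
  rw [subset_innerApprox_iff_thickening_subset hε, ← outerApprox_eq_thickening]
  simpa only [add_sub_cancel_right] using outerApprox_subset_superlevelSet_sub hdrop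

end Superlevel

/-- If `|Δ(x) − Δ(y)| < δ` whenever `Δ(x) ≥ z₀` and `dist(x, y) < ε`, then for every
`z ≥ z₀` one has the chain of inclusions
`A(z + δ) ⊆ A'(z, ε) ⊆ A(z) ⊆ A''(z, ε) ⊆ A(z − δ)`. -/
theorem superlevel_inclusions {X : Type*} [MetricSpace X] (Δ : X → ℝ)
    (z₀ δ ε : ℝ) (hδ : 0 < δ) (hε : 0 < ε)
    (hunif : ∀ x y : X, z₀ ≤ Δ x → dist x y < ε → |Δ x - Δ y| < δ) :
    ∀ z : ℝ, z₀ ≤ z →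
      superlevelSet Δ (z + δ) ⊆ innerApprox Δ z ε ∧
      innerApprox Δ z ε ⊆ superlevelSet Δ z ∧
      superlevelSet Δ z ⊆ outerApprox Δ z ε ∧
      outerApprox Δ z ε ⊆ superlevelSet Δ (z - δ) := by
  intro z hz
  have hdrop (w : ℝ) (hw : z₀ ≤ w) (x y : X) (hx : w ≤ Δ x) (hxy : dist x y < ε) :
      Δ x - Δ y ≤ δ :=
    (le_abs_self _).trans (hunif x y (hw.trans hx) hxy).le
  exact ⟨superlevelSet_add_subset_innerApprox hε (hdrop (z + δ) (by linarith)),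
    innerApprox_subset_superlevelSet,
    superlevelSet_subset_outerApprox hε,
    outerApprox_subset_superlevelSet_sub (hdrop z hz)⟩
end

section
/- Let (X, μ) be a probability space, {T_t : t ∈ ℕ} a sequence of measurable maps X → X, and {A_t : t ∈ ℕ} a sequence of measurable subsets of X. Let c ∈ (0, 1] and {Φ_t : t ∈ ℕ} be positive reals with ∑_{t=1}^{∞} Φ_t = ∞. Suppose for each t there are nonnegative integrable functions h'_t, h''_t on X with h'_t ≤ 1_{A_t} ≤ h''_t pointwise and c · Φ_t ≤ ∫_X h'_t dμ ≤ ∫_X h''_t dμ ≤ (1/c) · Φ_t, and suppose x ∈ X is a point such that lim_{N→∞} (∑_{t=1}^{N} h'_t(T_t x)) / (∑_{t=1}^{N} ∫ h'_t dμ) = 1 and lim_{N→∞} (∑_{t=1}^{N} h''_t(T_t x)) / (∑_{t=1}^{N} ∫ h''_t dμ) = 1. Then c ≤ liminf_{N→∞} #\{1 ≤ t ≤ N : T_t x ∈ A_t\} / (∑_{t=1}^{N} Φ_t) and limsup_{N→∞} #\{1 ≤ t ≤ N : T_t x ∈ A_t\} / (∑_{t=1}^{N} Φ_t) ≤ 1/c.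 In particular, T_t x ∈ A_t for infinitely many t ∈ ℕ. -/
open MeasureTheory Finset Filter Set
open scoped Topology

/-! With `f ≤ 1_A ≤ g` and `a Φ ≤ ∫ f ≤ ∫ g ≤ b Φ`, the number of visits divided by `∑ Φ` is
eventually at least `a` times the ergodic ratio of `f` and at most `b` times that of `g`, and both
ratios tend to `1`. Finitely many visits would force the normalized count to tend to `0`, against
its positive lower limit.
-/

section Ratio

variable {ι : Type*} {l : Filter ι} {n s p q i : ι → ℝ} {a b : ℝ}

theorem eventually_mul_div_le_div (ha : 0 < a) (hn : ∀ᶠ N in l, 0 ≤ n N)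
    (hs : ∀ᶠ N in l, 0 < s N) (hpn : ∀ᶠ N in l, p N ≤ n N) (hsi : ∀ᶠ N in l, a * s N ≤ i N) :
    ∀ᶠ N in l, a * (p N / i N) ≤ n N / s N := by
  filter_upwards [hn, hs, hpn, hsi] with N hn hs hpn hsi
  have : 0 < a * s N := mul_pos ha hs
  calc a * (p N / i N) ≤ a * (n N / (a * s N)) := by gcongr
    _ = n N / s N := by field_simp

theorem eventually_div_le_mul_div (hn : ∀ᶠ N in l, 0 ≤ n N) (hs : ∀ᶠ N in l, 0 < s N)
    (hi : ∀ᶠ N in l, 0 < i N) (hnq : ∀ᶠ N in l, n N ≤ q N) (his : ∀ᶠ N in l, i N ≤ b * s N) :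
    ∀ᶠ N in l, n N / s N ≤ b * (q N / i N) := by
  filter_upwards [hn, hs, hi, hnq, his] with N hn hs hi hnq his
  have hb : 0 < b := pos_of_mul_pos_left (hi.trans_le his) hs.le
  calc n N / s N = b * (n N / (b * s N)) := by field_simp
    _ ≤ b * (q N / i N) := by
      have := hn.trans hnq
      gcongr

theorem le_liminf_and_limsup_le_of_eventually_le [l.NeBot] {u v w : ι → ℝ}
    (hu : Tendsto u l (𝓝 a)) (hw : Tendsto w l (𝓝 b))
    (huv : ∀ᶠ N in l, u N ≤ v N) (hvw : ∀ᶠ N in l, v N ≤ w N) :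
    a ≤ liminf v l ∧ limsup v l ≤ b := by
  have hv_above : IsBoundedUnder (· ≤ ·) l v := hw.isBoundedUnder_le.mono_le hvw
  have hv_below : IsBoundedUnder (· ≥ ·) l v := hu.isBoundedUnder_ge.mono_ge huv
  rw [← hu.liminf_eq, ← hw.limsup_eq]
  exact ⟨liminf_le_liminf huv hu.isBoundedUnder_ge hv_above.isCoboundedUnder_ge,
    limsup_le_limsup hvw hv_below.isCoboundedUnder_le hw.isBoundedUnder_le⟩

end Ratio

theorem card_filter_mem_eq_sum_indicator {ι X : Type*} (s : Finset ι) (y : ι → X) (A : ι → Set X)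
    [DecidablePred fun t => y t ∈ A t] :
    ((s.filter fun t => y t ∈ A t).card : ℝ) = ∑ t ∈ s, (A t).indicator 1 (y t) := by
  simp only [natCast_card_filter, indicator_apply, Pi.one_apply]

theorem infinite_setOf_of_liminf_card_div_pos {p : ℕ → Prop} [DecidablePred p] {S : ℕ → ℝ}
    (hS : Tendsto S atTop atTop)
    (hpos : 0 < liminf (fun N => (((Finset.Icc 1 N).filter p).card : ℝ) / S N) atTop) :
    {t | p t}.Infinite := by
  intro hfin
  have hcard (N : ℕ) : (((Finset.Icc 1 N).filter p).card : ℝ) ≤ hfin.toFinset.card := by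
    exact_mod_cast Finset.card_le_card fun t ht => hfin.mem_toFinset.2 (Finset.mem_filter.1 ht).2
  have hzero : Tendsto (fun N => (((Finset.Icc 1 N).filter p).card : ℝ) / S N) atTop (𝓝 0) :=
    tendsto_bdd_div_atTop_nhds_zero (.of_forall fun _ => Nat.cast_nonneg _) (.of_forall hcard) hS
  exact hpos.ne' hzero.liminf_eq

theorem borel_cantelli_from_sandwich_general
    {X : Type*} [MeasurableSpace X] (μ : Measure X) (y : ℕ → X)
    (A : ℕ → Set X) [DecidablePred fun t => y t ∈ A t] {a b : ℝ} (ha : 0 < a)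
    (Φ : ℕ → ℝ) (hΦdiv : Tendsto (fun N => ∑ t ∈ Icc 1 N, Φ t) atTop atTop)
    (f g : ℕ → X → ℝ) (hf : ∀ t, Integrable (f t) μ) (hg : ∀ t, Integrable (g t) μ)
    (hfAg : ∀ t x, f t x ≤ (A t).indicator 1 x ∧ (A t).indicator 1 x ≤ g t x)
    (hΦf : ∀ t, a * Φ t ≤ ∫ x, f t x ∂μ) (hgΦ : ∀ t, ∫ x, g t x ∂μ ≤ b * Φ t)
    (hyf : Tendsto (fun N => (∑ t ∈ Icc 1 N, f t (y t)) / ∑ t ∈ Icc 1 N, ∫ x, f t x ∂μ)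
      atTop (𝓝 1))
    (hyg : Tendsto (fun N => (∑ t ∈ Icc 1 N, g t (y t)) / ∑ t ∈ Icc 1 N, ∫ x, g t x ∂μ)
      atTop (𝓝 1)) :
    a ≤ liminf (fun N =>
        (((Finset.Icc 1 N).filter fun t => y t ∈ A t).card : ℝ) / ∑ t ∈ Icc 1 N, Φ t) atTop ∧
    limsup (fun N =>
        (((Finset.Icc 1 N).filter fun t => y t ∈ A t).card : ℝ) / ∑ t ∈ Icc 1 N, Φ t) atTop ≤ b ∧
    {t : ℕ | y t ∈ A t}.Infinite := by
  have hΦpos : ∀ᶠ N in atTop, 0 < ∑ t ∈ Icc 1 N, Φ t := hΦdiv.eventually_gt_atTop 0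
  have hf_count (N : ℕ) :
      ∑ t ∈ Icc 1 N, f t (y t) ≤ ((Finset.Icc 1 N).filter fun t => y t ∈ A t).card :=
    card_filter_mem_eq_sum_indicator _ y A ▸ sum_le_sum fun t _ => (hfAg t (y t)).1
  have hcount_g (N : ℕ) :
      ((Finset.Icc 1 N).filter fun t => y t ∈ A t).card ≤ ∑ t ∈ Icc 1 N, g t (y t) :=
    card_filter_mem_eq_sum_indicator _ y A ▸ sum_le_sum fun t _ => (hfAg t (y t)).2
  have hΦf_sum (N : ℕ) : a * ∑ t ∈ Icc 1 N, Φ t ≤ ∑ t ∈ Icc 1 N, ∫ x, f t x ∂μ :=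
    mul_sum (Icc 1 N) Φ a ▸ sum_le_sum fun t _ => hΦf t
  have hgΦ_sum (N : ℕ) : ∑ t ∈ Icc 1 N, ∫ x, g t x ∂μ ≤ b * ∑ t ∈ Icc 1 N, Φ t :=
    mul_sum (Icc 1 N) Φ b ▸ sum_le_sum fun t _ => hgΦ t
  have hfg_sum (N : ℕ) : ∑ t ∈ Icc 1 N, ∫ x, f t x ∂μ ≤ ∑ t ∈ Icc 1 N, ∫ x, g t x ∂μ :=
    sum_le_sum fun t _ => integral_mono (hf t) (hg t) fun x => (hfAg t x).1.trans (hfAg t x).2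
  have hg_pos : ∀ᶠ N in atTop, 0 < ∑ t ∈ Icc 1 N, ∫ x, g t x ∂μ :=
    hΦpos.mono fun N hN => (mul_pos ha hN).trans_le ((hΦf_sum N).trans (hfg_sum N))
  obtain ⟨hliminf, hlimsup⟩ := le_liminf_and_limsup_le_of_eventually_le
    (by simpa only [mul_one] using hyf.const_mul a) (by simpa only [mul_one] using hyg.const_mul b)
    (eventually_mul_div_le_div ha (.of_forall fun _ => Nat.cast_nonneg _) hΦpos
      (.of_forall hf_count) (.of_forall hΦf_sum))
    (eventually_div_le_mul_div (.of_forall fun _ => Nat.cast_nonneg _) hΦpos hg_pos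
      (.of_forall hcount_g) (.of_forall hgΦ_sum))
  exact ⟨hliminf, hlimsup, infinite_setOf_of_liminf_card_div_pos hΦdiv (ha.trans_le hliminf)⟩

open Classical in
/-- The deduction of the Borel–Cantelli statement from the smooth sandwich
`h'_t ≤ 1_{A_t} ≤ h''_t` with `c Φ_t ≤ ∫ h'_t ≤ ∫ h''_t ≤ Φ_t / c` and the almost-everywhere
averaging of `h'` and `h''`: if `∑ Φ_t = ∞` and at the point `x` both
`∑_{t≤N} h'_t(T_t x) / ∑_{t≤N} ∫ h'_t → 1` and `∑_{t≤N} h''_t(T_t x) / ∑_{t≤N} ∫ h''_t → 1`,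
then `c ≤ liminf #{1 ≤ t ≤ N : T_t x ∈ A_t} / ∑_{t=1}^N Φ_t`,
`limsup #{1 ≤ t ≤ N : T_t x ∈ A_t} / ∑_{t=1}^N Φ_t ≤ 1/c`, and in particular
`T_t x ∈ A_t` for infinitely many `t`. -/
theorem borel_cantelli_from_sandwich
    {X : Type*} [MeasurableSpace X] (μ : Measure X) [IsProbabilityMeasure μ]
    (T : ℕ → X → X) (hT : ∀ t, Measurable (T t))
    (A : ℕ → Set X) (hA : ∀ t, MeasurableSet (A t))
    (c : ℝ) (hc : 0 < c) (hc1 : c ≤ 1)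
    (Φ : ℕ → ℝ) (hΦpos : ∀ t, 0 < Φ t)
    (hΦdiv : Tendsto (fun N => ∑ t ∈ Icc 1 N, Φ t) atTop atTop)
    (h' h'' : ℕ → X → ℝ)
    (h'pos : ∀ t x, 0 ≤ h' t x) (h''pos : ∀ t x, 0 ≤ h'' t x)
    (h'int : ∀ t, Integrable (h' t) μ) (h''int : ∀ t, Integrable (h'' t) μ)
    (hsandwich : ∀ t x, h' t x ≤ (A t).indicator 1 x ∧ (A t).indicator 1 x ≤ h'' t x)
    (hnorms : ∀ t, c * Φ t ≤ ∫ x, h' t x ∂μ ∧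
      (∫ x, h' t x ∂μ) ≤ ∫ x, h'' t x ∂μ ∧ (∫ x, h'' t x ∂μ) ≤ (1 / c) * Φ t)
    (x : X)
    (hx' : Tendsto
      (fun N => (∑ t ∈ Icc 1 N, h' t (T t x)) / ∑ t ∈ Icc 1 N, ∫ y, h' t y ∂μ)
      atTop (𝓝 1))
    (hx'' : Tendsto
      (fun N => (∑ t ∈ Icc 1 N, h'' t (T t x)) / ∑ t ∈ Icc 1 N, ∫ y, h'' t y ∂μ)
      atTop (𝓝 1)) :
    c ≤ liminf (fun N =>
        (((Finset.Icc 1 N).filter fun t => T t x ∈ A t).card : ℝ) / ∑ t ∈ Icc 1 N, Φ t) atTop ∧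
    limsup (fun N =>
        (((Finset.Icc 1 N).filter fun t => T t x ∈ A t).card : ℝ) / ∑ t ∈ Icc 1 N, Φ t) atTop ≤
      1 / c ∧
    {t : ℕ | T t x ∈ A t}.Infinite := by
  exact borel_cantelli_from_sandwich_general μ (fun t => T t x) A hc Φ hΦdiv h' h'' h'int h''int
    hsandwich (fun t => (hnorms t).1) (fun t => (hnorms t).2.2) hx' hx''
end
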